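/- arXiv:2509.13432 — 4 statements merged into one kernel-verified Lean document; each statement's English description precedes it below -/
import Mathlib

section
/- The swapped map F̃₁ (equal to F₂ on T and to F₁ off T) is a bijection of V if and only if T is x-invariant, i.e. x(T) = T; and in that case F̃₂ is also a bijection of V. -/
/-- Replacing a bijection `f` by a bijection `g` on a set `T` yields a bijection iff `f` and `g`
have the same image on `T`. -/
theorem Equiv.bijective_ite_mem_iff_image_eq {α β : Type*} (f g : α ≃ β) (T : Set α)
    [DecidablePred (· ∈ T)] :
    Function.Bijective (fun a => if a ∈ T then g a else f a) ↔ f '' T = g '' T := by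
  constructor
  · rintro ⟨hinj, hsurj⟩
    ext y
    constructor
    · rintro ⟨t, ht, rfl⟩
      obtain ⟨v, hv⟩ := hsurj (f t)
      by_cases hvT : v ∈ T
      · exact ⟨v, hvT, by simpa [hvT] using hv⟩
      · have hvt : v = t := by simpa [hvT] using hv
        exact absurd (hvt ▸ ht) hvT
    · rintro ⟨t, ht, rfl⟩
      by_cases hs : f.symm (g t) ∈ T
      · exact ⟨_, hs, by simp⟩
      · have hst : f.symm (g t) = t := hinj (by simp [hs, ht])
        exact absurd (hst.symm.subst (motive := (· ∈ T)) ht) hs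
  · intro h
    have hdisj : ∀ a ∈ T, ∀ b ∉ T, g a ≠ f b := by
      intro a ha b hb hab
      obtain ⟨c, hc, hca⟩ := h.symm ▸ Set.mem_image_of_mem g ha
      exact hb (f.injective (hca.trans hab) ▸ hc)
    constructor
    · intro a b hab
      by_cases ha : a ∈ T <;> by_cases hb : b ∈ T
      · simpa [ha, hb] using hab
      · exact absurd (by simpa [ha, hb] using hab) (hdisj a ha b hb)
      · exact absurd (by simpa [ha, hb] using hab.symm) (hdisj b hb a ha)
      · simpa [ha, hb] using hab
    · intro y
      by_cases hs : f.symm y ∈ T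
      · have hy : y ∈ g '' T := h ▸ ⟨_, hs, by simp⟩
        obtain ⟨c, hc, rfl⟩ := hy
        exact ⟨c, by simp [hc]⟩
      · exact ⟨f.symm y, by simp [hs]⟩

theorem Equiv.Perm.image_inv_mul_eq_iff {α : Type*} (f g : Equiv.Perm α) (T : Set α) :
    ⇑(g⁻¹ * f) '' T = T ↔ f '' T = g '' T := by
  rw [← g.injective.image_injective.eq_iff, ← Set.image_comp, ← Equiv.Perm.coe_mul,
    mul_inv_cancel_left]

/-- Swapped maps are bijections iff the swap set is x-invariant:
the swapped map `F̃₁` (equal to `F₂` on `T` and `F₁` off `T`) is a bijection of `V`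
iff `x(T) = T` where `x = F₂⁻¹ ∘ F₁`; and in that case the swapped map `F̃₂` is
also a bijection. -/
theorem swapped_bijective_iff_invariant
    {V : Type*} [Fintype V] (F₁ F₂ : Equiv.Perm V)
    (hne : ∀ v : V, F₁ v ≠ F₂ v)
    (T : Set V) [DecidablePred (· ∈ T)] :
    (Function.Bijective (fun v : V => if v ∈ T then F₂ v else F₁ v) ↔
      ⇑(F₂⁻¹ * F₁) '' T = T) ∧
    (⇑(F₂⁻¹ * F₁) '' T = T →
      Function.Bijective (fun v : V => if v ∈ T then F₁ v else F₂ v)) := by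
  rw [Equiv.Perm.image_inv_mul_eq_iff]
  exact ⟨F₁.bijective_ite_mem_iff_image_eq F₂ T,
    fun h => (F₂.bijective_ite_mem_iff_image_eq F₁ T).2 h.symm⟩
end

section
/- Suppose T ⊆ V satisfies x(T) = T. Then the relative permutation x̃ = F̃₂⁻¹ ∘ F̃₁ of the swapped pair satisfies x̃(v) = x⁻¹(v) for all v ∈ T and x̃(v) = x(v) for all v ∉ T. Consequently the orbit partition of V under x̃ coincides with the orbit partition under x; in particular any pattern of label swaps on alternating cycles leaves the position-block partition determined by the x-orbits unchanged. -/
/-- If `g` moves every point within its `f`-cycle, then every `g`-cycle lies in an `f`-cycle. -/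
theorem Equiv.Perm.SameCycle.of_forall_sameCycle_apply {V : Type*} {f g : Equiv.Perm V}
    (h : ∀ v, f.SameCycle v (g v)) {u v : V} (huv : g.SameCycle u v) : f.SameCycle u v := by
  obtain ⟨i, rfl⟩ := huv
  induction i with
  | zero => exact Equiv.Perm.SameCycle.refl f u
  | succ n ih =>
    rw [add_comm, zpow_add, zpow_one, Equiv.Perm.mul_apply]
    exact ih.trans (h _)
  | pred n ih =>
    refine ih.trans ?_
    have hstep := h ((g ^ (-(n : ℤ) - 1)) u)
    rw [← Equiv.Perm.mul_apply, ← zpow_one_add, add_sub_cancel] at hstep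
    exact hstep.symm

/-- Swap-invariance of the orbit structure: if `T` is `x`-invariant
and `(G₁, G₂)` is the swapped pair of permutations (`G₁ = F₂` on `T`, `F₁` off `T`;
`G₂ = F₁` on `T`, `F₂` off `T`), then `x̃ = G₂⁻¹ ∘ G₁` equals `x⁻¹` on `T` and `x`
off `T`; consequently `x̃` and `x` have the same orbit partition of `V`, so any
pattern of label swaps on alternating cycles leaves the position-block partition
determined by the `x`-orbits unchanged. -/
theorem swapped_relative_permutation
    {V : Type*} [Fintype V] (F₁ F₂ : Equiv.Perm V)
    (hne : ∀ v : V, F₁ v ≠ F₂ v)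
    (T : Set V) [DecidablePred (· ∈ T)]
    (hT : ⇑(F₂⁻¹ * F₁) '' T = T)
    (G₁ G₂ : Equiv.Perm V)
    (hG₁ : ∀ v : V, G₁ v = if v ∈ T then F₂ v else F₁ v)
    (hG₂ : ∀ v : V, G₂ v = if v ∈ T then F₁ v else F₂ v) :
    (∀ v ∈ T, (G₂⁻¹ * G₁) v = (F₂⁻¹ * F₁)⁻¹ v) ∧
    (∀ v ∉ T, (G₂⁻¹ * G₁) v = (F₂⁻¹ * F₁) v) ∧
    (∀ u v : V, (G₂⁻¹ * G₁).SameCycle u v ↔ (F₂⁻¹ * F₁).SameCycle u v) := by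
  have hmem (v : V) : (F₂⁻¹ * F₁) v ∈ T ↔ v ∈ T := by
    conv_lhs => rw [← hT]
    exact (F₂⁻¹ * F₁).injective.mem_set_image
  have hin : ∀ v ∈ T, (G₂⁻¹ * G₁) v = (F₂⁻¹ * F₁)⁻¹ v := by
    intro v hv
    have hw : (F₂⁻¹ * F₁)⁻¹ v ∈ T := by
      rw [← hmem, ← Equiv.Perm.mul_apply, mul_inv_cancel]
      exact hv
    rw [Equiv.Perm.mul_apply, Equiv.Perm.inv_eq_iff_eq, hG₁, hG₂, if_pos hv, if_pos hw]
    simp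
  have hout : ∀ v ∉ T, (G₂⁻¹ * G₁) v = (F₂⁻¹ * F₁) v := by
    intro v hv
    rw [Equiv.Perm.mul_apply, Equiv.Perm.inv_eq_iff_eq, hG₁, hG₂, if_neg hv,
      if_neg (mt (hmem v).1 hv)]
    simp
  refine ⟨hin, hout, fun u v => ⟨fun h => h.of_forall_sameCycle_apply fun w => ?_,
    fun h => h.of_forall_sameCycle_apply fun w => ?_⟩⟩
  · by_cases hw : w ∈ T
    · rw [hin w hw]
      exact Equiv.Perm.sameCycle_inv.1
        (Equiv.Perm.sameCycle_apply_right.2 (Equiv.Perm.SameCycle.refl _ w))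
    · rw [hout w hw]
      exact Equiv.Perm.sameCycle_apply_right.2 (Equiv.Perm.SameCycle.refl _ w)
  · by_cases hw : w ∈ T
    · have hback := hin _ ((hmem w).2 hw)
      rw [← Equiv.Perm.mul_apply (F₂⁻¹ * F₁)⁻¹, inv_mul_cancel, Equiv.Perm.one_apply] at hback
      rw [← Equiv.Perm.sameCycle_apply_right, hback]
    · rw [← hout w hw]
      exact Equiv.Perm.sameCycle_apply_right.2 (Equiv.Perm.SameCycle.refl _ w)
end

section
/- Let V be a finite set and let F₁, F₂ be permutations of V with F₁(v) ≠ F₂(v) for all v ∈ V; set x = F₂⁻¹ ∘ F₁ and let r be the number of orbits of x on V. Then the number of 1-factorizations of the underlying digraph, i.e. the number of ordered pairs (G₁, G₂) of bijections of V satisfying {G₁(v), G₂(v)} = {F₁(v), F₂(v)} for every v ∈ V, equals 2^r. -/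
open Classical in
/-- The permutation that follows `F` on `S` and `G` off `S`, where `S` is compatible with the
pair `(F, G)`. -/
noncomputable def Equiv.Perm.switch {V : Type*} [Finite V] (F G : Equiv.Perm V) (S : V → Prop)
    (hS : ∀ v w, F v = G w → (S v ↔ S w)) : Equiv.Perm V :=
  Equiv.ofBijective (fun v => if S v then F v else G v) <| Finite.injective_iff_bijective.mp <| by
    intro v w h
    by_cases hv : S v <;> by_cases hw : S w <;> simp only [hv, hw, if_true, if_false] at h
    · exact F.injective h
    · exact absurd ((hS v w h).mp hv) hw
    · exact absurd ((hS w v h.symm).mp hw) hv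
    · exact G.injective h

open Classical in
theorem Equiv.Perm.switch_apply {V : Type*} [Finite V] (F G : Equiv.Perm V) (S : V → Prop)
    (hS : ∀ v w, F v = G w → (S v ↔ S w)) (v : V) :
    F.switch G S hS v = if S v then F v else G v :=
  rfl

/-- A predicate preserved by a permutation `x` is constant on the orbits of `x`. -/
theorem Equiv.Perm.iff_of_orbitRel_zpowers {V : Type*} (x : Equiv.Perm V) {S : V → Prop}
    (hS : ∀ v, S (x v) ↔ S v) {a b : V}
    (h : MulAction.orbitRel (Subgroup.zpowers x) V a b) : S a ↔ S b := by
  obtain ⟨⟨_, n, rfl⟩, rfl⟩ := MulAction.orbitRel_apply.mp h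
  clear h
  change S ((x ^ n) b) ↔ S b
  induction n with
  | zero => simp
  | succ n ih => rw [add_comm, zpow_add, zpow_one, Equiv.Perm.mul_apply, hS, ih]
  | pred n ih =>
    rw [← ih, ← hS, ← Equiv.Perm.mul_apply, ← zpow_one_add, add_sub_cancel]

/-- In a 1-factorization `(G₁, G₂)` of the digraph of `(F₁, F₂)`, the set of vertices where
`G₁` agrees with `F₁` is preserved by `F₂⁻¹ * F₁`. -/
theorem Equiv.Perm.agree_iff_of_pair_eq {V : Type*} {F₁ F₂ G₁ G₂ : Equiv.Perm V}
    (hne : ∀ v, F₁ v ≠ F₂ v) (hG : ∀ v, ({G₁ v, G₂ v} : Set V) = {F₁ v, F₂ v}) (v : V) :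
    G₁ ((F₂⁻¹ * F₁) v) = F₁ ((F₂⁻¹ * F₁) v) ↔ G₁ v = F₁ v := by
  have hx : F₂ ((F₂⁻¹ * F₁) v) = F₁ v := by simp
  generalize (F₂⁻¹ * F₁) v = w at hx ⊢
  have hwv : w ≠ v := by
    rintro rfl
    exact hne w hx.symm
  have hv := Set.pair_eq_pair_iff.mp (hG v)
  have hw := Set.pair_eq_pair_iff.mp (hG w)
  have h₁ : G₁ w ≠ G₁ v := G₁.injective.ne hwv
  have h₂ : G₂ w ≠ G₂ v := G₂.injective.ne hwv
  have := hne v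
  have := hne w
  grind

/-- Number of 1-factorizations is `2^r`: if `F₁(v) ≠ F₂(v)` for all
`v` and `r` is the number of orbits of `x = F₂⁻¹ ∘ F₁` on `V`, then the number of
ordered pairs `(G₁, G₂)` of bijections of `V` with `{G₁(v), G₂(v)} = {F₁(v), F₂(v)}`
for every `v` equals `2^r`. -/
theorem count_one_factorizations
    {V : Type*} [Fintype V] (F₁ F₂ : Equiv.Perm V)
    (hne : ∀ v : V, F₁ v ≠ F₂ v) (r : ℕ)
    (hr : r = Nat.card
      (MulAction.orbitRel.Quotient (Subgroup.zpowers (F₂⁻¹ * F₁)) V)) :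
    Nat.card {p : Equiv.Perm V × Equiv.Perm V //
      ∀ v : V, ({p.1 v, p.2 v} : Set V) = {F₁ v, F₂ v}} = 2 ^ r := by
  let Q := MulAction.orbitRel.Quotient (Subgroup.zpowers (F₂⁻¹ * F₁)) V
  let π : V → Q := Quotient.mk _
  have hπ (v w : V) (h : F₁ v = F₂ w) : π v = π w := by
    refine (Quotient.sound (MulAction.orbitRel_apply.mpr
      ⟨⟨F₂⁻¹ * F₁, Subgroup.mem_zpowers _⟩, ?_⟩)).symm
    change (F₂⁻¹ * F₁) v = w
    simp [h]
  let Φ (s : Q → Prop) : {p : Equiv.Perm V × Equiv.Perm V //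
      ∀ v : V, ({p.1 v, p.2 v} : Set V) = {F₁ v, F₂ v}} :=
    ⟨(F₁.switch F₂ (fun v => s (π v)) fun v w h => by rw [hπ v w h],
      F₂.switch F₁ (fun v => s (π v)) fun v w h => by rw [hπ w v h.symm]), fun v => by
        by_cases h : s (π v) <;> simp [Equiv.Perm.switch_apply, h, Set.pair_comm]⟩
  have hΦ : Function.Bijective Φ := by
    constructor
    · have key (s : Q → Prop) (v : V) : s (π v) ↔ (Φ s).1.1 v = F₁ v := by
        by_cases h : s (π v) <;> simp [Φ, Equiv.Perm.switch_apply, h, (hne v).symm]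
      intro s t hst
      funext q
      induction q using Quotient.inductionOn with
      | h v => exact propext ((key s v).trans (hst ▸ (key t v).symm))
    · rintro ⟨⟨G₁, G₂⟩, hG⟩
      refine ⟨Quotient.lift (fun v => G₁ v = F₁ v) fun a b h => propext <|
        Equiv.Perm.iff_of_orbitRel_zpowers _ (S := fun v => G₁ v = F₁ v)
          (Equiv.Perm.agree_iff_of_pair_eq hne hG) h, ?_⟩
      refine Subtype.ext (Prod.ext (Equiv.ext fun v => ?_) (Equiv.ext fun v => ?_)) <;>
      · have hv := Set.pair_eq_pair_iff.mp (hG v)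
        have := hne v
        simp only [Φ, π, Equiv.Perm.switch_apply, Quotient.lift_mk]
        grind
  rw [← Nat.card_eq_of_bijective Φ hΦ, Nat.card_fun, hr]
  simp [Q]
end

section
/- Suppose u : Fin r → Sym(V) is a family of elements of C = ⟨F₁, F₂⟩ and σ : Fin r → ZMod m satisfies u_i(a(0,j)) = a(i, j + σ(i)) for all i ∈ Fin r and j ∈ ZMod m. Let v₀ = a(0,0) and assume F₁(v₀) ≠ v₀, F₂(v₀) ≠ v₀, and F₁(v₀) ≠ F₂(v₀). Then there exists a subset S ⊆ C with |S| = r·m, containing the identity, F₁, and F₂, such that the evaluation map w ↦ w(v₀) is a bijection from S onto V; i.e. there is a spanning factorization of size |V| = rm containing {∅, F₁, F₂}. -/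
/-- If iterating `x` moves along the `ℤ/m`-coordinate of `a`, then `x ^ k` shifts it by `k`. -/
theorem pow_apply_of_forall_apply_eq_add_one {ι V : Type*} {m : ℕ} {a : ι × ZMod m → V}
    {x : Equiv.Perm V} (hx : ∀ i j, x (a (i, j)) = a (i, j + 1)) (k : ℕ) (i : ι) (j : ZMod m) :
    (x ^ k) (a (i, j)) = a (i, j + k) := by
  induction k with
  | zero => simp
  | succ k ih => rw [pow_succ', Equiv.Perm.mul_apply, ih, hx, Nat.cast_succ, add_assoc]

/-- Spanning factorization containing `{∅, F₁, F₂}`: with the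
addressing family `u_i ∈ C = ⟨F₁, F₂⟩`, `u_i(a(0,j)) = a(i, j + σ(i))`, root
`v₀ = a(0,0)`, and `F₁(v₀), F₂(v₀), v₀` pairwise distinct, there is a set
`S ⊆ C` of size `r·m` containing the identity, `F₁`, and `F₂`, whose evaluation
map `w ↦ w(v₀)` is a bijection from `S` onto `V`. -/
theorem spanning_factorization_with_generators
    {r m : ℕ} (hr : 0 < r) [NeZero m] {V : Type*} [Fintype V]
    (a : Fin r × ZMod m ≃ V) (F₁ F₂ : Equiv.Perm V)
    (hx : ∀ (i : Fin r) (j : ZMod m), (F₂⁻¹ * F₁) (a (i, j)) = a (i, j + 1))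
    (u : Fin r → Equiv.Perm V)
    (hu_mem : ∀ i : Fin r, u i ∈ Subgroup.closure ({F₁, F₂} : Set (Equiv.Perm V)))
    (σ : Fin r → ZMod m)
    (hu : ∀ (i : Fin r) (j : ZMod m), (u i) (a (⟨0, hr⟩, j)) = a (i, j + σ i))
    (h1 : F₁ (a (⟨0, hr⟩, 0)) ≠ a (⟨0, hr⟩, 0))
    (h2 : F₂ (a (⟨0, hr⟩, 0)) ≠ a (⟨0, hr⟩, 0))
    (h12 : F₁ (a (⟨0, hr⟩, 0)) ≠ F₂ (a (⟨0, hr⟩, 0))) :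
    ∃ S : Finset (Equiv.Perm V),
      ↑S ⊆ (Subgroup.closure ({F₁, F₂} : Set (Equiv.Perm V)) : Set (Equiv.Perm V)) ∧
      S.card = r * m ∧
      (1 : Equiv.Perm V) ∈ S ∧ F₁ ∈ S ∧ F₂ ∈ S ∧
      Set.BijOn (fun w : Equiv.Perm V => w (a (⟨0, hr⟩, 0))) ↑S Set.univ := by
  set C := Subgroup.closure ({F₁, F₂} : Set (Equiv.Perm V))
  have hF₁ : F₁ ∈ C := Subgroup.subset_closure (by simp)
  have hF₂ : F₂ ∈ C := Subgroup.subset_closure (by simp)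
  set v₀ := a (⟨0, hr⟩, 0) with hv₀
  have hsurj : Set.SurjOn (fun w : Equiv.Perm V => w v₀) C Set.univ := by
    intro v _
    obtain ⟨⟨i, j⟩, rfl⟩ := a.surjective v
    refine ⟨u i * (F₂⁻¹ * F₁) ^ (j - σ i).val,
      C.mul_mem (hu_mem i) (C.pow_mem (C.mul_mem (C.inv_mem hF₂) hF₁) _), ?_⟩
    simp only [Equiv.Perm.mul_apply (u i), hv₀]
    rw [pow_apply_of_forall_apply_eq_add_one hx, hu]
    simp
  have hinj : Set.InjOn (fun w : Equiv.Perm V => w v₀) {1, F₁, F₂} := by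
    rintro w (rfl | rfl | rfl) w' (rfl | rfl | rfl) h <;> simp_all [eq_comm]
  have hsub : ({1, F₁, F₂} : Set (Equiv.Perm V)) ⊆ C := by
    rintro w (rfl | rfl | rfl)
    exacts [C.one_mem, hF₁, hF₂]
  obtain ⟨S, hTS, hSC, hS⟩ := hinj.bijOn_image.exists_extend_of_subset hsub
    (Set.subset_univ _) hsurj
  lift S to Finset (Equiv.Perm V) using S.toFinite
  refine ⟨S, hSC, ?_, hTS (by simp), hTS (by simp), hTS (by simp), hS⟩
  have hcard := hS.injOn.ncard_image
  rw [hS.image_eq, Set.ncard_univ, Set.ncard_coe_finset, ← Nat.card_congr a] at hcard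
  simpa using hcard.symm
end
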